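/- arXiv:2509.02658 — 5 statements merged into one kernel-verified Lean document; each statement's English description precedes it below -/
import Mathlib

section
/- Let S be a nonempty finite type, let D and h be natural numbers, and let G_j, Ω_j : S → ℝ for j = 1, …, D be given functions (the log-moduli and chosen single-valued phase branches of D target wave-functions Ψ_j(x) = exp(G_j(x) + i Ω_j(x)) on their common support). Let r_both be the dimension over ℝ of the subspace of the function space S → ℝ spanned by the constant function 1 together with all G_j and all Ω_j. Then the following are equivalent: (i) there exist a trunk f : S → ℝ^h, head vectors α_j, φ_j ∈ ℝ^h and scalars β_j, γ_j ∈ ℝ (j = 1, …, D) such that for every j and every x ∈ S one has α_j·f(x) + β_j = G_j(x) and φ_j·f(x) + γ_j = Ω_j(x) (so that exp((α_j·f(x) + β_j) + i(φ_j·f(x) + γ_j)) = Ψ_j(x) for all x ∈ S); (ii) r_both ≤ h + 1. In particular the minimal trunk width realising all D states exactly on S is h⋆_both = r_both − 1. -/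
/-!
Reproducing a function by an affine head on the trunk `f` means that it lies in the span of `1` and
the `h` coordinates of `f`, a space of dimension at most `h + 1`. Conversely, since `1 ≠ 0`, the
singleton `{1}` extends to a basis of the span of `1` and the targets by adding some of the targets;
when the rank is at most `h + 1`, at most `h` targets are added, and they can serve as the
coordinates of a trunk.
-/

open Cardinal Module Submodule

theorem mk_le_natCast_iff_exists_subset_range {α : Type*} [Nonempty α] {s : Set α} {n : ℕ} :
    #s ≤ n ↔ ∃ g : Fin n → α, s ⊆ Set.range g := by
  constructor
  · intro hs
    obtain ⟨e⟩ : Nonempty (s ↪ Fin n) := by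
      rwa [← lift_mk_le', mk_fin, lift_natCast, lift_le_nat_iff]
    refine ⟨Function.extend e Subtype.val fun _ => Classical.arbitrary α, fun a ha => ?_⟩
    exact ⟨e ⟨a, ha⟩, e.injective.extend_apply _ _ ⟨a, ha⟩⟩
  · rintro ⟨g, hg⟩
    have hrange : #(Set.range g) ≤ n := by
      simpa only [lift_uzero, mk_fin, lift_natCast] using mk_range_le_lift (f := g)
    exact (mk_le_mk_of_subset hg).trans hrange

theorem rank_span_insert_le_of_subset_span_insert {R M : Type*} [Semiring R] [StrongRankCondition R]
    [AddCommMonoid M] [Module R M] {u : M} {s t : Set M} (hst : s ⊆ span R (insert u t)) :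
    Module.rank R (span R (insert u s)) ≤ #t + 1 := by
  have hspan : span R (insert u s) ≤ span R (insert u t) :=
    span_le.2 (Set.insert_subset (subset_span (Set.mem_insert u t)) hst)
  calc
    Module.rank R (span R (insert u s)) ≤ Module.rank R (span R (insert u t)) :=
      Submodule.rank_mono hspan
    _ ≤ #(insert u t : Set M) := rank_span_le _
    _ ≤ #t + 1 := mk_insert_le

section VectorSpace

variable {K V : Type*} [DivisionRing K] [AddCommGroup V] [Module K V]

theorem exists_subset_span_insert_and_mk_add_one_eq_rank
    {u : V} (hu : u ≠ 0) (s : Set V) :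
    ∃ t ⊆ s, s ⊆ span K (insert u t) ∧ #t + 1 = Module.rank K (span K (insert u s)) := by
  have hu_indep : LinearIndepOn K id {u} := LinearIndepOn.singleton hu
  obtain ⟨b, hbs, hub, hsb, hb⟩ := exists_linearIndepOn_id_extension hu_indep
    (Set.singleton_subset_iff.2 (Set.mem_insert u s))
  have hinsert : insert u (b \ {u}) = b := Set.insert_sdiff_self_of_mem (hub rfl)
  have hu_notMem : u ∉ b \ {u} := Set.notMem_sdiff_of_mem rfl
  have hspan : span K b = span K (insert u s) :=
    span_eq_of_le _ (hbs.trans subset_span) (span_le.2 hsb)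
  refine ⟨b \ {u}, Set.sdiff_singleton_subset_iff.2 hbs, ?_, ?_⟩
  · rw [hinsert]
    exact (Set.subset_insert u s).trans hsb
  · rw [← hspan, rank_span_set hb, ← mk_insert hu_notMem, hinsert]

theorem exists_fin_subset_span_insert_range_iff_rank_le
    {u : V} (hu : u ≠ 0) {s : Set V} {n : ℕ} :
    (∃ g : Fin n → V, s ⊆ span K (insert u (Set.range g))) ↔
      Module.rank K (span K (insert u s)) ≤ n + 1 := by
  constructor
  · rintro ⟨g, hg⟩
    calc
      Module.rank K (span K (insert u s)) ≤ #(Set.range g) + 1 :=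
        rank_span_insert_le_of_subset_span_insert hg
      _ ≤ n + 1 := by gcongr; exact mk_le_natCast_iff_exists_subset_range.2 ⟨g, subset_rfl⟩
  · intro hrank
    obtain ⟨t, -, hst, ht⟩ := exists_subset_span_insert_and_mk_add_one_eq_rank (K := K) hu s
    have ht_card : #t ≤ n := add_one_le_add_one_iff.1 (ht.trans_le hrank)
    obtain ⟨g, hg⟩ := mk_le_natCast_iff_exists_subset_range.1 ht_card
    exact ⟨g, hst.trans (span_mono (Set.insert_subset_insert hg))⟩

end VectorSpace

theorem mem_span_insert_one_range_iff_exists_affine {R S κ : Type*} [Semiring R] [Fintype κ]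
    {g : κ → S → R} {F : S → R} :
    F ∈ span R (insert 1 (Set.range g)) ↔
      ∃ (a : κ → R) (c : R), ∀ x, (∑ i, a i * g i x) + c = F x := by
  have eq_iff (a : κ → R) (c : R) :
      F = c • 1 + ∑ i, a i • g i ↔ ∀ x, (∑ i, a i * g i x) + c = F x := by
    simp only [funext_iff, Pi.add_apply, Pi.smul_apply, Finset.sum_apply, Pi.one_apply, smul_eq_mul,
      mul_one, add_comm c, eq_comm]
  simp only [mem_span_insert, mem_span_range_iff_exists_fun, ← eq_iff]
  constructor
  · rintro ⟨c, _, ⟨a, rfl⟩, hF⟩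
    exact ⟨a, c, hF⟩
  · rintro ⟨a, c, hF⟩
    exact ⟨c, _, ⟨a, rfl⟩, hF⟩

theorem stmh_representability_iff_rank_le_general {K S ι : Type*} [DivisionRing K] [Nonempty S]
    (h : ℕ) (G Ω : ι → S → K) :
    (∃ (f : S → Fin h → K) (α φ : ι → Fin h → K) (β γ : ι → K),
        ∀ (j : ι) (x : S),
          (∑ i, α j i * f x i) + β j = G j x ∧
          (∑ i, φ j i * f x i) + γ j = Ω j x)
      ↔ Module.rank K (span K ({(1 : S → K)} ∪ Set.range G ∪ Set.range Ω)) ≤ h + 1 := by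
  rw [Set.union_assoc, Set.singleton_union,
    ← exists_fin_subset_span_insert_range_iff_rank_le one_ne_zero]
  simp only [Set.union_subset_iff, Set.range_subset_iff, SetLike.mem_coe,
    mem_span_insert_one_range_iff_exists_affine]
  constructor
  · rintro ⟨f, α, φ, β, γ, hf⟩
    exact ⟨fun i x => f x i, fun j => ⟨α j, β j, fun x => (hf j x).1⟩,
      fun j => ⟨φ j, γ j, fun x => (hf j x).2⟩⟩
  · rintro ⟨g, hG, hΩ⟩
    choose α β hα using hG
    choose φ γ hφ using hΩ
    exact ⟨fun x i => g i x, α, φ, β, γ, fun j x => ⟨hα j x, hφ j x⟩⟩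

/-- **ST-MH representability and minimal width on the common support.**
Given `D` target log-moduli `G j : S → ℝ` and single-valued phase branches
`Ω j : S → ℝ` on a finite nonempty common support `S`, and letting `r_both` be
the dimension of the span of the constant function `1` together with all `G j`
and `Ω j`, a single trunk of latent width `h` with affine linear heads can
reproduce all the log-moduli and phases exactly on `S` iff `r_both ≤ h + 1`. -/
theorem stmh_representability_iff_rank_le
    (S : Type*) [Fintype S] [Nonempty S]
    (D h : ℕ) (G Ω : Fin D → S → ℝ)
    (r_both : ℕ)
    (hr : r_both =
      Module.finrank ℝ
        (Submodule.span ℝ ({(1 : S → ℝ)} ∪ Set.range G ∪ Set.range Ω))) :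
    (∃ (f : S → Fin h → ℝ) (α φ : Fin D → Fin h → ℝ) (β γ : Fin D → ℝ),
        ∀ (j : Fin D) (x : S),
          (∑ i, α j i * f x i) + β j = G j x ∧
          (∑ i, φ j i * f x i) + γ j = Ω j x)
      ↔ r_both ≤ h + 1 := by
  rw [stmh_representability_iff_rank_le_general, hr, ← finrank_eq_rank]
  norm_cast
end

section
/- Let A be a unital associative algebra over ℝ, let N ≥ 3, J₁ ∈ ℝ, and for each site j ∈ ℤ/Nℤ let s_j = (s_j^1, s_j^2, s_j^3) be a triple of elements of A whose components at distinct sites commute. Define d(j,k) := Σ_{a=1}^3 s_j^a s_k^a and τ_j² := Σ_{a=1}^3 (s_j^a + s_{j+1}^a + s_{j+2}^a)². Assume the on-site Casimir condition d(j,j) = (3/4)·1 for every j. Then J₁ Σ_j d(j, j+1) + (J₁/2) Σ_j d(j, j+2) = (J₁/4) Σ_j τ_j² − (9 J₁ N / 16)·1. -/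
/-!
Expanding `τ_j²` gives the three on-site Casimirs and twice the three pairwise products of the sites
`j`, `j + 1`, `j + 2`. Summed over the ring, every nearest-neighbour bond lies in two consecutive
triples and every next-nearest-neighbour bond in one, so `Σ τ_j²` weights the two kinds of bond in
the ratio `2 : 1`, which is that of `J₁` to `J₂` at the Majumdar–Ghosh point.
-/

section

variable {ι α A : Type*} [Fintype α]

theorem dotProduct_comm_of_commute [NonUnitalNonAssocSemiring A] {u v : α → A}
    (h : ∀ a, Commute (u a) (v a)) : u ⬝ᵥ v = v ⬝ᵥ u :=
  Finset.sum_congr rfl fun a _ => h a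

theorem dotProduct_comm_of_pairwise_commute [NonUnitalNonAssocSemiring A] {s : ι → α → A}
    (hs : Pairwise fun j k => ∀ a, Commute (s j a) (s k a)) (j k : ι) :
    s j ⬝ᵥ s k = s k ⬝ᵥ s j := by
  obtain rfl | hjk := eq_or_ne j k
  · rfl
  · exact dotProduct_comm_of_commute (hs hjk)

theorem add_add_dotProduct_self [NonUnitalNonAssocSemiring A] {u v w : α → A}
    (huv : u ⬝ᵥ v = v ⬝ᵥ u) (hvw : v ⬝ᵥ w = w ⬝ᵥ v) (huw : u ⬝ᵥ w = w ⬝ᵥ u) :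
    (u + v + w) ⬝ᵥ (u + v + w) =
      u ⬝ᵥ u + v ⬝ᵥ v + w ⬝ᵥ w + 2 • (u ⬝ᵥ v + v ⬝ᵥ w + u ⬝ᵥ w) := by
  simp only [add_dotProduct, dotProduct_add, ← huv, ← hvw, ← huw]
  abel

/-- The total spin of three consecutive sites, with `σ` the map sending a site to its successor. -/
def tripleSpin [Add A] (σ : Equiv.Perm ι) (s : ι → α → A) (j : ι) : α → A :=
  s j + s (σ j) + s (σ (σ j))

theorem tripleSpin_dotProduct_self [Semiring A] (σ : Equiv.Perm ι) (s : ι → α → A) (j : ι) :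
    tripleSpin σ s j ⬝ᵥ tripleSpin σ s j = ∑ a, (s j a + s (σ j) a + s (σ (σ j)) a) ^ 2 := by
  simp only [dotProduct, tripleSpin, Pi.add_apply, sq]

theorem sum_tripleSpin_dotProduct_self [Fintype ι] [NonUnitalNonAssocSemiring A]
    (σ : Equiv.Perm ι) {s : ι → α → A} (hsymm : ∀ j k, s j ⬝ᵥ s k = s k ⬝ᵥ s j) :
    ∑ j, tripleSpin σ s j ⬝ᵥ tripleSpin σ s j =
      3 • ∑ j, s j ⬝ᵥ s j + 4 • ∑ j, s j ⬝ᵥ s (σ j) + 2 • ∑ j, s j ⬝ᵥ s (σ (σ j)) := by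
  have onsite_succ : ∑ j, s (σ j) ⬝ᵥ s (σ j) = ∑ j, s j ⬝ᵥ s j :=
    Equiv.sum_comp σ fun j => s j ⬝ᵥ s j
  have onsite_succ_succ : ∑ j, s (σ (σ j)) ⬝ᵥ s (σ (σ j)) = ∑ j, s j ⬝ᵥ s j :=
    (Equiv.sum_comp σ fun j => s (σ j) ⬝ᵥ s (σ j)).trans onsite_succ
  have bond_succ : ∑ j, s (σ j) ⬝ᵥ s (σ (σ j)) = ∑ j, s j ⬝ᵥ s (σ j) :=
    Equiv.sum_comp σ fun j => s j ⬝ᵥ s (σ j)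
  simp only [tripleSpin, add_add_dotProduct_self (hsymm _ _) (hsymm _ _) (hsymm _ _),
    Finset.sum_add_distrib, ← Finset.smul_sum, onsite_succ, onsite_succ_succ, bond_succ]
  abel

theorem majumdar_ghosh_casimir_representation_general {K : Type*} [Field K] [NeZero (2 : K)]
    [Fintype ι] [NonUnitalNonAssocRing A] [Module K A] (σ : Equiv.Perm ι) (J : K) {s : ι → α → A}
    (hsymm : ∀ j k, s j ⬝ᵥ s k = s k ⬝ᵥ s j) :
    J • ∑ j, s j ⬝ᵥ s (σ j) + (J / 2) • ∑ j, s j ⬝ᵥ s (σ (σ j)) =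
      (J / 4) • ∑ j, tripleSpin σ s j ⬝ᵥ tripleSpin σ s j - (3 * J / 4) • ∑ j, s j ⬝ᵥ s j := by
  have four_eq : (4 : K) = 2 * 2 := by norm_num
  rw [sum_tripleSpin_dotProduct_self σ hsymm, four_eq]
  match_scalars <;> field_simp <;> ring

end

/-- **Majumdar–Ghosh representation of the `J₁–J₂` Hamiltonian at `J₂ = J₁/2`.**
In a unital associative `ℝ`-algebra with spin triples `s j` on a periodic ring
of `N ≥ 3` sites whose components at distinct sites commute, and with the
on-site Casimir condition `d(j,j) = (3/4)·1`, the Majumdar–Ghosh Hamiltonian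
satisfies
`J₁ Σ_j d(j,j+1) + (J₁/2) Σ_j d(j,j+2) = (J₁/4) Σ_j τ_j² − (9J₁N/16)·1`. -/
theorem majumdar_ghosh_casimir_representation
    (A : Type*) [Ring A] [Algebra ℝ A]
    (N : ℕ) [NeZero N] (hN : 3 ≤ N) (J₁ : ℝ)
    (s : ZMod N → Fin 3 → A)
    (hcomm : ∀ (j k : ZMod N), j ≠ k → ∀ (a b : Fin 3),
      s j a * s k b = s k b * s j a)
    (d : ZMod N → ZMod N → A)
    (hd : ∀ j k, d j k = ∑ a, s j a * s k a)
    (τsq : ZMod N → A)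
    (hτ : ∀ j, τsq j = ∑ a, (s j a + s (j + 1) a + s (j + 2) a) ^ 2)
    (hcas : ∀ j, d j j = (3 / 4 : ℝ) • (1 : A)) :
    J₁ • (∑ j, d j (j + 1)) + (J₁ / 2) • (∑ j, d j (j + 2))
      = (J₁ / 4) • (∑ j, τsq j) - ((9 * J₁ * (N : ℝ)) / 16) • (1 : A) := by
  have hdot (j k : ZMod N) : s j ⬝ᵥ s k = d j k := (hd j k).symm
  have hsymm := dotProduct_comm_of_pairwise_commute (s := s) fun j k hjk a => hcomm j k hjk a a
  have succ_succ (j : ZMod N) : j + 1 + 1 = j + 2 := by ring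
  have key := majumdar_ghosh_casimir_representation_general (Equiv.addRight 1) J₁ hsymm
  simp only [tripleSpin_dotProduct_self, Equiv.coe_addRight, succ_succ, ← hτ, hdot, hcas] at key
  rw [key, Finset.sum_const, Finset.card_univ, ZMod.card]
  module
end

section
/- Let N = 2M with M ≥ 1, and index configurations by s : ℤ/Nℤ → {↑, ↓}. Define the singlet-pair amplitude f(↑,↓) = 1/√2, f(↓,↑) = −1/√2, and f = 0 on equal pairs, and define the two dimer-covering wave-functions Φ_A(s) := Π_{m=0}^{M−1} f(s(2m), s(2m+1)) and Φ_B(s) := Π_{m=0}^{M−1} f(s(2m+1), s(2m+2)), indices modulo N. Then the overlap satisfies Σ_s Φ_B(s) Φ_A(s) = (−1)^M · 2^{1−M}, i.e. ⟨Φ_B|Φ_A⟩ = (−1)^{N/2} 2^{1−N/2}. -/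
/-!
The product `Φ_B Φ_A` of the two dimer wave-functions contains one factor `f (s i) (s (i + 1))` for
each bond of the ring, so the overlap is the partition function of a periodic chain with transfer
matrix `F = (f a b)`, that is `tr (F ^ (2 * M))`. As `F` vanishes on the diagonal, `F ^ 2` is the
scalar matrix `f ↑↓ * f ↓↑ = -1/2`, and its `M`-th power has trace `2 * (-1/2) ^ M`.
-/

open Finset Matrix

section TransferMatrix

variable {ι R : Type*} [Fintype ι] [DecidableEq ι] [CommSemiring R]

theorem matrix_pow_succ_apply_eq_sum_prod (A : Matrix ι ι R) (n : ℕ) (a b : ι) :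
    (A ^ (n + 1)) a b = ∑ p : Fin n → ι, ∏ k : Fin (n + 1),
      A (Fin.cons (α := fun _ ↦ ι) a p k) (Fin.snoc (α := fun _ ↦ ι) p b k) := by
  induction n generalizing a with
  | zero => simp [Fin.snoc]
  | succ n ih =>
    rw [pow_succ', mul_apply, ← (Fin.consEquiv fun _ ↦ ι).sum_comp, Fintype.sum_prod_type]
    refine sum_congr rfl fun c _ ↦ ?_
    rw [ih, mul_sum]
    refine sum_congr rfl fun p _ ↦ ?_
    simp [Fin.consEquiv, Fin.prod_univ_succ (n := n + 1), ← Fin.cons_snoc_eq_snoc_cons]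

theorem trace_matrix_pow_eq_sum_prod_zmod (A : Matrix ι ι R) (n : ℕ) [NeZero n] :
    (A ^ n).trace = ∑ s : ZMod n → ι, ∏ i, A (s i) (s (i + 1)) := by
  obtain ⟨n, rfl⟩ := Nat.exists_eq_succ_of_ne_zero (NeZero.ne n)
  change _ = ∑ s : Fin (n + 1) → ι, ∏ i, A (s i) (s (i + 1))
  rw [← (Fin.consEquiv fun _ ↦ ι).sum_comp, Fintype.sum_prod_type]
  -- `Fin.snoc p a` is the closed path `Fin.cons a p` shifted by one site.
  simp [trace, matrix_pow_succ_apply_eq_sum_prod, Fin.snoc_eq_cons_rotate, Fin.consEquiv]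

end TransferMatrix

section DimerCoverings

variable {α : Type*} [CommMonoid α]

theorem prod_range_two_mul (g : ℕ → α) (M : ℕ) :
    ∏ k ∈ range (2 * M), g k = ∏ m ∈ range M, g (2 * m) * g (2 * m + 1) := by
  induction M with
  | zero => simp
  | succ M ih => rw [mul_add_one, prod_range_succ, prod_range_succ, prod_range_succ, ih, mul_assoc]

theorem prod_zmod_eq_prod_range (n : ℕ) [NeZero n] (g : ZMod n → α) :
    ∏ i, g i = ∏ k ∈ range n, g k := by
  rw [prod_range, ← (ZMod.finEquiv n).toEquiv.prod_comp]
  obtain ⟨n, rfl⟩ := Nat.exists_eq_succ_of_ne_zero (NeZero.ne n)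
  exact prod_congr rfl fun k _ ↦ congrArg g (Fin.cast_val_eq_self k).symm

theorem prod_odd_bonds_mul_prod_even_bonds {ι : Type*} (f : ι → ι → α) (M : ℕ) [NeZero (2 * M)]
    (s : ZMod (2 * M) → ι) :
    (∏ m : Fin M, f (s (2 * m + 1 : ℕ)) (s (2 * m + 2 : ℕ))) *
        ∏ m : Fin M, f (s (2 * m : ℕ)) (s (2 * m + 1 : ℕ)) =
      ∏ i, f (s i) (s (i + 1)) := by
  rw [prod_zmod_eq_prod_range, prod_range_two_mul, prod_range, ← prod_mul_distrib]
  refine prod_congr rfl fun m _ ↦ ?_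
  rw [mul_comm, ← Nat.cast_add_one, ← Nat.cast_add_one]

end DimerCoverings

section Overlap

variable {R : Type*} [CommSemiring R]

theorem sq_of_bool_of_diag_eq_zero (f : Bool → Bool → R) (hf : ∀ a, f a a = 0) :
    (of f) ^ 2 = (f true false * f false true) • (1 : Matrix Bool Bool R) := by
  ext a b
  cases a <;> cases b <;> simp [sq, mul_apply, hf, mul_comm]

theorem majumdar_ghosh_dimer_overlap_general
    (M : ℕ) [NeZero (2 * M)]
    (f : Bool → Bool → R)
    (hf_eq : ∀ a, f a a = 0)
    (ΦA ΦB : (ZMod (2 * M) → Bool) → R)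
    (hA : ∀ s, ΦA s = ∏ m : Fin M, f (s (2 * m : ℕ)) (s (2 * m + 1 : ℕ)))
    (hB : ∀ s, ΦB s = ∏ m : Fin M, f (s (2 * m + 1 : ℕ)) (s (2 * m + 2 : ℕ))) :
    ∑ s, ΦB s * ΦA s = 2 * (f true false * f false true) ^ M :=
  calc
    ∑ s, ΦB s * ΦA s = ∑ s : ZMod (2 * M) → Bool, ∏ i, of f (s i) (s (i + 1)) :=
      sum_congr rfl fun s _ ↦ by
        simp only [hA, hB, prod_odd_bonds_mul_prod_even_bonds, of_apply]
    _ = ((of f) ^ (2 * M)).trace := (trace_matrix_pow_eq_sum_prod_zmod _ _).symm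
    _ = ((f true false * f false true) ^ M • (1 : Matrix Bool Bool R)).trace := by
      rw [pow_mul, sq_of_bool_of_diag_eq_zero f hf_eq, smul_pow, one_pow]
    _ = 2 * (f true false * f false true) ^ M := by
      simp [mul_comm]

end Overlap

/-- **Overlap of the two Majumdar–Ghosh dimer coverings.**
On a periodic ring of `N = 2M` sites, with configurations `s : ZMod N → Bool`
(`true = ↑`), singlet-pair amplitude `f` (`f ↑↓ = 1/√2`, `f ↓↑ = −1/√2`,
`f = 0` on equal pairs) and dimer-covering wave-functions
`Φ_A(s) = Π_m f(s(2m), s(2m+1))`, `Φ_B(s) = Π_m f(s(2m+1), s(2m+2))`,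
the overlap is `⟨Φ_B|Φ_A⟩ = Σ_s Φ_B(s) Φ_A(s) = (−1)^M · 2^(1−M)`. -/
theorem majumdar_ghosh_dimer_overlap
    (M : ℕ) (hM : 1 ≤ M) [NeZero (2 * M)]
    (f : Bool → Bool → ℝ)
    (hf_ud : f true false = 1 / Real.sqrt 2)
    (hf_du : f false true = -(1 / Real.sqrt 2))
    (hf_eq : ∀ a, f a a = 0)
    (ΦA ΦB : (ZMod (2 * M) → Bool) → ℝ)
    (hA : ∀ s, ΦA s = ∏ m : Fin M,
        f (s ((2 * (m : ℕ) : ℕ) : ZMod (2 * M)))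
          (s ((2 * (m : ℕ) + 1 : ℕ) : ZMod (2 * M))))
    (hB : ∀ s, ΦB s = ∏ m : Fin M,
        f (s ((2 * (m : ℕ) + 1 : ℕ) : ZMod (2 * M)))
          (s ((2 * (m : ℕ) + 2 : ℕ) : ZMod (2 * M)))) :
    ∑ s : ZMod (2 * M) → Bool, ΦB s * ΦA s
      = (-1 : ℝ) ^ M * (2 : ℝ) ^ ((1 : ℤ) - (M : ℤ)) := by
  have hff : f true false * f false true = -1 / 2 := by
    rw [hf_ud, hf_du, mul_neg, div_mul_div_comm, Real.mul_self_sqrt zero_le_two]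
    norm_num
  rw [majumdar_ghosh_dimer_overlap_general M f hf_eq ΦA ΦB hA hB, hff, zpow_sub₀ two_ne_zero,
    zpow_one, zpow_natCast, div_pow]
  ring
end

section
/- Let C be a nonempty finite type, t₀ ∈ ℝ, and ψ : ℝ → C → ℂ such that for each x ∈ C the function t ↦ ψ(t, x) has complex derivative ψ'(x) at t₀ and ψ(t₀, x) ≠ 0. Define the log-derivative O(x) := ψ'(x)/ψ(t₀, x), the Born probability p(t, x) := |ψ(t, x)|² / Σ_{y∈C} |ψ(t, y)|², and ⟨O⟩ := Σ_{y∈C} p(t₀, y) O(y). Then for each x ∈ C, the function t ↦ p(t, x) has derivative at t₀ equal to 2 Re[ O(x) − ⟨O⟩ ] · p(t₀, x). -/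
/-
The logarithmic derivative of `|ψ|²` is `2 Re O`, and normalising a family of weights subtracts from
each logarithmic derivative its mean under the normalised weights. Written multiplicatively, as
`w' = ℓ * w`, both facts persist at the nodes of `ψ`: there `|ψ|²` has derivative zero, so `O` may
take any value.
-/

theorem hasDerivAt_div_sum_of_deriv_eq_mul {𝕜 𝕜' ι : Type*} [NontriviallyNormedField 𝕜]
    [NontriviallyNormedField 𝕜'] [NormedAlgebra 𝕜 𝕜'] {s : Finset ι} {w : 𝕜 → ι → 𝕜'}
    {ℓ : ι → 𝕜'} {t₀ : 𝕜} (hw : ∀ j ∈ s, HasDerivAt (fun t => w t j) (ℓ j * w t₀ j) t₀)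
    (hsum : ∑ j ∈ s, w t₀ j ≠ 0) {i : ι} (hi : i ∈ s) :
    HasDerivAt (fun t => w t i / ∑ j ∈ s, w t j)
      ((ℓ i - ∑ j ∈ s, w t₀ j / (∑ k ∈ s, w t₀ k) * ℓ j) * (w t₀ i / ∑ j ∈ s, w t₀ j)) t₀ := by
  have hmean : ∑ j ∈ s, w t₀ j / (∑ k ∈ s, w t₀ k) * ℓ j =
      (∑ j ∈ s, ℓ j * w t₀ j) / ∑ j ∈ s, w t₀ j := by
    rw [Finset.sum_div]
    exact Finset.sum_congr rfl fun j _ => by ring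
  refine ((hw i hi).fun_div (HasDerivAt.fun_sum hw) hsum).congr_deriv ?_
  rw [hmean]
  field_simp

theorem sum_norm_sq_ne_zero {ι E : Type*} [Fintype ι] [NormedAddCommGroup E] {v : ι → E}
    (hv : v ≠ 0) : ∑ i, ‖v i‖ ^ 2 ≠ 0 := by
  obtain ⟨i, hi⟩ := Function.ne_iff.mp hv
  exact (Finset.sum_pos' (fun j _ => sq_nonneg ‖v j‖)
    ⟨i, Finset.mem_univ i, pow_pos (norm_pos_iff.mpr hi) 2⟩).ne'

section RCLike

variable {𝕜 : Type*} [RCLike 𝕜]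

theorem hasDerivAt_norm_sq_of_deriv_eq_mul {f : ℝ → 𝕜} {f' ℓ : 𝕜} {t₀ : ℝ}
    (hf : HasDerivAt f f' t₀) (hℓ : f t₀ ≠ 0 → f' = ℓ * f t₀) :
    HasDerivAt (fun t => ‖f t‖ ^ 2) (2 * RCLike.re ℓ * ‖f t₀‖ ^ 2) t₀ := by
  refine hf.norm_sq.congr_deriv ?_
  rcases eq_or_ne (f t₀) 0 with hnode | hnz
  · simp [hnode]
  · have hinner : inner ℝ (f t₀) f' = RCLike.re ℓ * ‖f t₀‖ ^ 2 := by
      rw [real_inner_eq_re_inner 𝕜, RCLike.inner_apply, hℓ hnz, mul_assoc, RCLike.mul_conj,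
        ← RCLike.ofReal_pow, RCLike.re_mul_ofReal]
    rw [hinner, mul_assoc]

theorem born_probability_hasDerivAt_general {C : Type*} [Fintype C]
    {t₀ : ℝ} {ψ : ℝ → C → 𝕜} {ψ' : C → 𝕜}
    (hderiv : ∀ x, HasDerivAt (fun t => ψ t x) (ψ' x) t₀) (hψ : ψ t₀ ≠ 0)
    {O : C → 𝕜} (hO : ∀ x, ψ t₀ x ≠ 0 → O x = ψ' x / ψ t₀ x)
    {p : ℝ → C → ℝ} (hp : ∀ t x, p t x = ‖ψ t x‖ ^ 2 / ∑ y, ‖ψ t y‖ ^ 2)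
    {Oavg : 𝕜} (hOavg : Oavg = ∑ y, (p t₀ y : 𝕜) * O y) (x : C) :
    HasDerivAt (fun t => p t x) (2 * RCLike.re (O x - Oavg) * p t₀ x) t₀ := by
  have hweight : ∀ y ∈ Finset.univ,
      HasDerivAt (fun t => ‖ψ t y‖ ^ 2) (2 * RCLike.re (O y) * ‖ψ t₀ y‖ ^ 2) t₀ :=
    fun y _ => hasDerivAt_norm_sq_of_deriv_eq_mul (hderiv y) fun hy => by
      rw [hO y hy, div_mul_cancel₀ _ hy]
  have hmean : 2 * RCLike.re Oavg = ∑ y, p t₀ y * (2 * RCLike.re (O y)) := by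
    simp only [hOavg, map_sum, RCLike.re_ofReal_mul, Finset.mul_sum]
    exact Finset.sum_congr rfl fun y _ => mul_left_comm _ _ _
  have hquot :=
    hasDerivAt_div_sum_of_deriv_eq_mul hweight (sum_norm_sq_ne_zero hψ) (Finset.mem_univ x)
  simp only [← hp] at hquot
  rwa [map_sub, mul_sub, hmean]

end RCLike

/-- **Derivative of the Born probability in VMC.**
For a parametrised trial wave-function `ψ` on a nonempty finite configuration
set, nonvanishing at the current parameter `t₀`, with log-derivative
`O(x) = ψ'(x)/ψ(t₀,x)` and Born probability
`p(t,x) = |ψ(t,x)|² / Σ_y |ψ(t,y)|²`, the derivative of `t ↦ p(t,x)` at `t₀`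
equals `2 Re[O(x) − ⟨O⟩] · p(t₀,x)`. -/
theorem born_probability_hasDerivAt
    (C : Type*) [Fintype C] [Nonempty C]
    (t₀ : ℝ) (ψ : ℝ → C → ℂ) (ψ' : C → ℂ)
    (hderiv : ∀ x, HasDerivAt (fun t => ψ t x) (ψ' x) t₀)
    (hnz : ∀ x, ψ t₀ x ≠ 0)
    (O : C → ℂ) (hO : ∀ x, O x = ψ' x / ψ t₀ x)
    (p : ℝ → C → ℝ)
    (hp : ∀ t x, p t x = ‖ψ t x‖ ^ 2 / ∑ y, ‖ψ t y‖ ^ 2)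
    (Oavg : ℂ) (hOavg : Oavg = ∑ y, (p t₀ y : ℂ) * O y) :
    ∀ x, HasDerivAt (fun t => p t x) (2 * (O x - Oavg).re * p t₀ x) t₀ :=
  born_probability_hasDerivAt_general hderiv
    (fun h => hnz (Classical.arbitrary C) (congrFun h _)) (fun x _ => hO x) hp hOavg
end

section
/- Let C be a nonempty finite type, t₀ ∈ ℝ, and H : C → C → ℂ Hermitian, i.e. H(y,x) = conj(H(x,y)) for all x, y. Let ψ : ℝ → C → ℂ be such that for each x the function t ↦ ψ(t, x) has complex derivative ψ'(x) at t₀ and ψ(t₀, x) ≠ 0. Define O(x) := ψ'(x)/ψ(t₀,x), p(x) := |ψ(t₀,x)|²/Σ_y |ψ(t₀,y)|², ⟨O⟩ := Σ_x p(x) O(x), E_loc(x) := Σ_y H(x,y) ψ(t₀,y)/ψ(t₀,x), and the Rayleigh quotient E(t) := (Σ_x conj(ψ(t,x)) Σ_y H(x,y) ψ(t,y)) / (Σ_x |ψ(t,x)|²). Then E(t₀) is real, and t ↦ E(t) has derivative at t₀ equal to 2 Re[ Σ_x p(x) · conj(O(x) − ⟨O⟩) · (E_loc(x) − E(t₀))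 ]. -/
/-!
For a symmetric operator `T` the derivative of the Rayleigh quotient `R` along a curve with position
`φ` and velocity `v` is `2 re ⟪v, T φ - R φ • φ⟫ / ‖φ‖ ^ 2`. Since `p x` is proportional to
`conj (φ x) * φ x`, multiplying and dividing by `φ x` turns such an inner product into the
Born average of `conj (v / φ) * (E_loc - E)`. Finally `E` is the Born average of `E_loc`, so the
second factor averages to zero and any constant may be subtracted from `v / φ`.
-/

section InnerProductSpace

open RCLike ContinuousLinearMap

open scoped InnerProductSpace

variable {𝕜 F : Type*} [RCLike 𝕜] [NormedAddCommGroup F] [InnerProductSpace 𝕜 F] [NormedSpace ℝ F]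
  {T : F →L[𝕜] F} {γ : ℝ → F} {v : F} {t₀ : ℝ}

theorem hasDerivAt_ofReal_comp {f : ℝ → ℝ} {f' : ℝ} (hf : HasDerivAt f f' t₀) :
    HasDerivAt (fun t ↦ (f t : 𝕜)) (f' : 𝕜) t₀ :=
  (ofRealCLM (K := 𝕜)).hasFDerivAt.comp_hasDerivAt t₀ hf

theorem hasDerivAt_reApplyInnerSelf_comp (hT : T.IsSymmetric) (hγ : HasDerivAt γ v t₀) :
    HasDerivAt (fun t ↦ T.reApplyInnerSelf (γ t)) (2 * re ⟪v, T (γ t₀)⟫_𝕜) t₀ := by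
  have hTγ : HasDerivAt (fun t ↦ T (γ t)) (T v) t₀ :=
    (T.restrictScalars ℝ).hasFDerivAt.comp_hasDerivAt t₀ hγ
  have hinner : HasDerivAt (fun t ↦ T.reApplyInnerSelf (γ t))
      (re (⟪T (γ t₀), v⟫_𝕜 + ⟪T v, γ t₀⟫_𝕜)) t₀ :=
    (reCLM (K := 𝕜)).hasFDerivAt.comp_hasDerivAt t₀ (hTγ.inner 𝕜 hγ)
  refine hinner.congr_deriv ?_
  rw [map_add, inner_re_symm (T (γ t₀)), show ⟪T v, γ t₀⟫_𝕜 = ⟪v, T (γ t₀)⟫_𝕜 from hT v (γ t₀),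
    ← two_mul]

theorem hasDerivAt_rayleighQuotient_comp (hT : T.IsSymmetric) (hγ : HasDerivAt γ v t₀)
    (hγ₀ : γ t₀ ≠ 0) :
    HasDerivAt (fun t ↦ T.rayleighQuotient (γ t))
      (2 * (re ⟪v, T (γ t₀) - (T.rayleighQuotient (γ t₀) : 𝕜) • γ t₀⟫_𝕜 / ‖γ t₀‖ ^ 2)) t₀ := by
  have hnorm : HasDerivAt (fun t ↦ ‖γ t‖ ^ 2) (2 * re ⟪v, γ t₀⟫_𝕜) t₀ := by
    simpa [reApplyInnerSelf_apply, inner_self_eq_norm_sq] using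
      hasDerivAt_reApplyInnerSelf_comp (T := .id 𝕜 F) (fun _ _ ↦ rfl) hγ
  have hnorm₀ : ‖γ t₀‖ ≠ 0 := norm_ne_zero_iff.2 hγ₀
  refine ((hasDerivAt_reApplyInnerSelf_comp hT hγ).fun_div hnorm
    (pow_ne_zero 2 hnorm₀)).congr_deriv ?_
  rw [inner_sub_right, inner_smul_right, map_sub, re_ofReal_mul, rayleighQuotient]
  field_simp

end InnerProductSpace

theorem sum_mul_sub_mul_sub_sum {ι R : Type*} [CommRing R] (s : Finset ι) {w : ι → R}
    (hw : ∑ i ∈ s, w i = 1) (f g : ι → R) (c : R) :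
    ∑ i ∈ s, w i * ((f i - c) * (g i - ∑ j ∈ s, w j * g j)) =
      ∑ i ∈ s, w i * (f i * (g i - ∑ j ∈ s, w j * g j)) := by
  set m := ∑ j ∈ s, w j * g j with hm
  have hzero : ∑ i ∈ s, w i * (g i - m) = 0 := by
    simp only [mul_sub, Finset.sum_sub_distrib, ← Finset.sum_mul, hw, one_mul, ← hm, sub_self]
  calc ∑ i ∈ s, w i * ((f i - c) * (g i - m))
      = ∑ i ∈ s, w i * (f i * (g i - m)) - c * ∑ i ∈ s, w i * (g i - m) := by
        rw [Finset.mul_sum, ← Finset.sum_sub_distrib]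
        exact Finset.sum_congr rfl fun i _ ↦ by ring
    _ = ∑ i ∈ s, w i * (f i * (g i - m)) := by rw [hzero, mul_zero, sub_zero]

section Born

open Matrix WithLp

open scoped ComplexConjugate

variable {𝕜 C : Type*} [RCLike 𝕜] [Fintype C]

/-- The Born probability `p` of a wave-function `φ`, identically `0` when `φ = 0`. -/
noncomputable def bornProb (φ : C → 𝕜) (x : C) : ℝ :=
  ‖φ x‖ ^ 2 / ∑ y, ‖φ y‖ ^ 2

/-- The average `⟨f⟩` of an observable `f` under the Born probability of `φ`. -/
noncomputable def bornMean (φ f : C → 𝕜) : 𝕜 :=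
  ∑ x, (bornProb φ x : 𝕜) * f x

/-- The local estimator `E_loc` of the energy of `φ`; its value is `0` at the zeros of `φ`. -/
noncomputable def localEnergy (H : Matrix C C 𝕜) (φ : C → 𝕜) (x : C) : 𝕜 :=
  (H *ᵥ φ) x / φ x

/-- The energy `E = ⟨φ, Hφ⟩ / ⟨φ, φ⟩` of a wave-function `φ`, with values in `𝕜` because it need not
be real for an arbitrary matrix `H`; its value is `0` when `φ = 0`. -/
noncomputable def rayleighEnergy (H : Matrix C C 𝕜) (φ : C → 𝕜) : 𝕜 :=
  (star φ ⬝ᵥ H *ᵥ φ) / ∑ x, (‖φ x‖ : 𝕜) ^ 2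

theorem sum_norm_sq_eq_norm_toLp_sq (φ : C → 𝕜) :
    ∑ x, (‖φ x‖ : 𝕜) ^ 2 = ((‖toLp 2 φ‖ ^ 2 : ℝ) : 𝕜) := by
  rw [EuclideanSpace.norm_sq_eq]
  push_cast
  rfl

theorem sum_norm_sq_ne_zero_s18 {φ : C → 𝕜} (hφ : φ ≠ 0) : ∑ x, (‖φ x‖ : 𝕜) ^ 2 ≠ 0 := by
  rw [sum_norm_sq_eq_norm_toLp_sq, RCLike.ofReal_ne_zero]
  exact pow_ne_zero 2 (norm_ne_zero_iff.2 ((toLp_eq_zero 2).not.2 hφ))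

theorem sum_bornProb {φ : C → 𝕜} (hφ : φ ≠ 0) : ∑ x, (bornProb φ x : 𝕜) = 1 := by
  simp only [bornProb, RCLike.ofReal_div, RCLike.ofReal_sum, RCLike.ofReal_pow, ← Finset.sum_div]
  exact div_self (sum_norm_sq_ne_zero_s18 hφ)

theorem bornProb_mul_div (φ : C → 𝕜) (x : C) (a : 𝕜) :
    (bornProb φ x : 𝕜) * (a / φ x) = conj (φ x) * a / ∑ y, (‖φ y‖ : 𝕜) ^ 2 := by
  rcases eq_or_ne (φ x) 0 with hx | hx
  · simp [hx]
  · rw [bornProb]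
    push_cast
    rw [← RCLike.conj_mul]
    field_simp

theorem bornMean_div (φ u : C → 𝕜) :
    bornMean φ (u / φ) = (star φ ⬝ᵥ u) / ∑ x, (‖φ x‖ : 𝕜) ^ 2 := by
  simp only [bornMean, Pi.div_apply, bornProb_mul_div, ← Finset.sum_div]
  rfl

theorem bornMean_localEnergy (H : Matrix C C 𝕜) (φ : C → 𝕜) :
    bornMean φ (localEnergy H φ) = rayleighEnergy H φ :=
  bornMean_div φ (H *ᵥ φ)

theorem bornMean_conj_div_mul_div {φ : C → 𝕜} (hφ : ∀ x, φ x ≠ 0) (v u : C → 𝕜) :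
    bornMean φ (fun x ↦ conj (v x / φ x) * (u x / φ x)) =
      (star v ⬝ᵥ u) / ∑ x, (‖φ x‖ : 𝕜) ^ 2 := by
  simp only [bornMean, dotProduct, Finset.sum_div]
  refine Finset.sum_congr rfl fun x _ ↦ ?_
  have hconj : conj (φ x) ≠ 0 := (map_ne_zero _).2 (hφ x)
  rw [mul_left_comm, bornProb_mul_div, map_div₀, Pi.star_apply, RCLike.star_def]
  field_simp

theorem bornMean_conj_sub_mul_localEnergy_sub [Nonempty C] (H : Matrix C C 𝕜) {φ : C → 𝕜}
    (hφ : ∀ x, φ x ≠ 0) (v : C → 𝕜) (c : 𝕜) :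
    bornMean φ (fun x ↦ conj (v x / φ x - c) * (localEnergy H φ x - rayleighEnergy H φ)) =
      (star v ⬝ᵥ (H *ᵥ φ - rayleighEnergy H φ • φ)) / ∑ x, (‖φ x‖ : 𝕜) ^ 2 := by
  have hφ₀ : φ ≠ 0 := Function.ne_iff.2 ⟨Classical.arbitrary C, hφ _⟩
  have hlocal (x : C) : localEnergy H φ x - rayleighEnergy H φ =
      (H *ᵥ φ - rayleighEnergy H φ • φ) x / φ x := by
    rw [Pi.sub_apply, Pi.smul_apply, smul_eq_mul, sub_div, mul_div_cancel_right₀ _ (hφ x),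
      localEnergy]
  calc bornMean φ (fun x ↦ conj (v x / φ x - c) * (localEnergy H φ x - rayleighEnergy H φ))
      = bornMean φ (fun x ↦ conj (v x / φ x) * (localEnergy H φ x - rayleighEnergy H φ)) := by
        simp only [map_sub, ← bornMean_localEnergy]
        exact sum_mul_sub_mul_sub_sum _ (sum_bornProb hφ₀) _ _ _
    _ = _ := by
        simp only [hlocal]
        exact bornMean_conj_div_mul_div hφ v _

theorem isSymmetric_toEuclideanCLM [DecidableEq C] {H : Matrix C C 𝕜} (hH : H.IsHermitian) :
    (toEuclideanCLM (𝕜 := 𝕜) H).IsSymmetric :=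
  isSymmetric_toEuclideanLin_iff.2 hH

theorem rayleighEnergy_eq_rayleighQuotient [DecidableEq C] {H : Matrix C C 𝕜} (hH : H.IsHermitian)
    (φ : C → 𝕜) :
    rayleighEnergy H φ = ((toEuclideanCLM (𝕜 := 𝕜) H).rayleighQuotient (toLp 2 φ) : 𝕜) := by
  have hsymm : inner 𝕜 (toEuclideanCLM (𝕜 := 𝕜) H (toLp 2 φ)) (toLp 2 φ) =
      inner 𝕜 (toLp 2 φ) (toEuclideanCLM (𝕜 := 𝕜) H (toLp 2 φ)) :=
    isSymmetric_toEuclideanCLM hH _ _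
  rw [RCLike.ofReal_div, (isSymmetric_toEuclideanCLM hH).coe_reApplyInnerSelf_apply, hsymm,
    toEuclideanCLM_toLp, EuclideanSpace.inner_toLp_toLp, dotProduct_comm,
    ← sum_norm_sq_eq_norm_toLp_sq, rayleighEnergy]

theorem hasDerivAt_rayleighEnergy {H : Matrix C C 𝕜} (hH : H.IsHermitian) {ψ : ℝ → C → 𝕜}
    {ψ' : C → 𝕜} {t₀ : ℝ} (hψ : HasDerivAt ψ ψ' t₀) (hψ₀ : ψ t₀ ≠ 0) :
    HasDerivAt (fun t ↦ rayleighEnergy H (ψ t))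
      ((2 * RCLike.re ((star ψ' ⬝ᵥ (H *ᵥ ψ t₀ - rayleighEnergy H (ψ t₀) • ψ t₀)) /
        ∑ x, (‖ψ t₀ x‖ : 𝕜) ^ 2) : ℝ) : 𝕜) t₀ := by
  classical
  simp only [funext fun t ↦ rayleighEnergy_eq_rayleighQuotient hH (ψ t)]
  have hlift : HasDerivAt (fun t ↦ toLp 2 (ψ t)) (toLp 2 ψ') t₀ :=
    (PiLp.hasFDerivAt_toLp (𝕜 := ℝ) 2 (ψ t₀)).comp_hasDerivAt t₀ hψ
  have hquot := hasDerivAt_rayleighQuotient_comp (isSymmetric_toEuclideanCLM hH) hlift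
    ((toLp_eq_zero 2).not.2 hψ₀)
  refine (hasDerivAt_ofReal_comp hquot).congr_deriv ?_
  rw [← rayleighEnergy_eq_rayleighQuotient hH, sum_norm_sq_eq_norm_toLp_sq, RCLike.div_re_ofReal,
    toEuclideanCLM_toLp, ← toLp_smul, ← toLp_sub, EuclideanSpace.inner_toLp_toLp, dotProduct_comm]

end Born

theorem rayleigh_quotient_hasDerivAt_general {𝕜 C : Type*} [RCLike 𝕜] [Fintype C] [Nonempty C]
    {H : Matrix C C 𝕜} (hH : H.IsHermitian) {ψ : ℝ → C → 𝕜} {ψ' : C → 𝕜} {t₀ : ℝ}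
    (hψ : HasDerivAt ψ ψ' t₀) (hψ₀ : ∀ x, ψ t₀ x ≠ 0) :
    RCLike.im (rayleighEnergy H (ψ t₀)) = 0 ∧
      HasDerivAt (fun t ↦ rayleighEnergy H (ψ t))
        ((2 * RCLike.re (bornMean (ψ t₀) fun x ↦
          starRingEnd 𝕜 (ψ' x / ψ t₀ x - bornMean (ψ t₀) (ψ' / ψ t₀)) *
            (localEnergy H (ψ t₀) x - rayleighEnergy H (ψ t₀))) : ℝ) : 𝕜) t₀ := by
  classical
  refine ⟨by rw [rayleighEnergy_eq_rayleighQuotient hH, RCLike.ofReal_im], ?_⟩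
  rw [bornMean_conj_sub_mul_localEnergy_sub H hψ₀]
  exact hasDerivAt_rayleighEnergy hH hψ (Function.ne_iff.2 ⟨Classical.arbitrary C, hψ₀ _⟩)

/-- **Gradient of the VMC energy (Rayleigh quotient).**
For a Hermitian `H` on a nonempty finite configuration set and a parametrised
nonvanishing trial wave-function `ψ`, with Born probability `p`, log-derivative
`O`, its average `⟨O⟩`, local estimator `E_loc` and Rayleigh quotient
`E(t) = ⟨ψ_t, Hψ_t⟩/⟨ψ_t, ψ_t⟩`, the energy `E(t₀)` is real and
`E'(t₀) = 2 Re[Σ_x p(x) · conj(O(x) − ⟨O⟩) · (E_loc(x) − E(t₀))]`. -/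
theorem rayleigh_quotient_hasDerivAt
    (C : Type*) [Fintype C] [Nonempty C]
    (t₀ : ℝ) (H : C → C → ℂ)
    (hH : ∀ x y, H y x = starRingEnd ℂ (H x y))
    (ψ : ℝ → C → ℂ) (ψ' : C → ℂ)
    (hderiv : ∀ x, HasDerivAt (fun t => ψ t x) (ψ' x) t₀)
    (hnz : ∀ x, ψ t₀ x ≠ 0)
    (O : C → ℂ) (hO : ∀ x, O x = ψ' x / ψ t₀ x)
    (p : C → ℝ)
    (hp : ∀ x, p x = ‖ψ t₀ x‖ ^ 2 / ∑ y, ‖ψ t₀ y‖ ^ 2)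
    (Oavg : ℂ) (hOavg : Oavg = ∑ x, (p x : ℂ) * O x)
    (Eloc : C → ℂ)
    (hEloc : ∀ x, Eloc x = ∑ y, H x y * ψ t₀ y / ψ t₀ x)
    (E : ℝ → ℂ)
    (hE : ∀ t, E t
        = (∑ x, starRingEnd ℂ (ψ t x) * ∑ y, H x y * ψ t y)
            / ∑ x, ((‖ψ t x‖ : ℝ) : ℂ) ^ 2) :
    (E t₀).im = 0
      ∧ HasDerivAt E
          (((2 * (∑ x, (p x : ℂ) * (starRingEnd ℂ (O x - Oavg))
              * (Eloc x - E t₀)).re : ℝ) : ℂ)) t₀ := by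
  simp only [hOavg, hO, hp, hEloc, funext hE, mul_assoc, ← Finset.sum_div]
  exact rayleigh_quotient_hasDerivAt_general (H := H) (.ext fun x y ↦ (hH y x).symm)
    (hasDerivAt_pi.2 hderiv) hnz
end
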